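/- Let h : ℝ × ℝ → ℝ be twice continuously differentiable in x and continuously differentiable in t on an open set U ⊆ ℝ × ℝ, suppose h(t,x) ≠ 0 on U, and suppose h solves the backward heat equation −∂h/∂t = (1/2)·∂²h/∂x² on U. Then the function μ(t,x) := (∂h/∂x)(t,x) / h(t,x) solves Burgers' equation −∂μ/∂t = (1/2)·∂²μ/∂x² + μ·∂μ/∂x on U. -/

import Mathlib

/-!
The calculus identity behind the theorem needs `∂ₓ³h` and `∂ₜ∂ₓh`, whose existence is an interior
regularity result for the backward heat equation. The odd reflection
`u (t, x + y) - u (t, x - y)` solves the equation and vanishes at `y = 0`; comparing it with an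
explicit solution through the maximum principle bounds `∂ₓu` by `sup |u|`. Applied to space
difference quotients, this bounds `∂ₓ²u` as well, so uniform convergence of solutions forces
uniform convergence of their time derivatives. The difference quotients of `u` are solutions that
converge uniformly to `∂ₓu`, which gives `∂ₜ∂ₓu = ∂ₓ∂ₜu = -∂ₓ³u / 2`.
-/

open Set Filter Topology Metric

lemma hasDerivAt_nonpos_of_isMaxOn_Icc_left {f : ℝ → ℝ} {f' a b : ℝ} (hab : a < b)
    (hmax : IsMaxOn f (Icc a b) a) (hf : HasDerivAt f f' a) : f' ≤ 0 := by
  have hcone : b - a ∈ posTangentConeAt (Icc a b) a :=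
    sub_mem_posTangentConeAt_of_segment_subset (segment_eq_Icc hab.le).subset
  have hle := hmax.localize.hasFDerivWithinAt_nonpos hf.hasFDerivAt.hasFDerivWithinAt hcone
  rw [ContinuousLinearMap.toSpanSingleton_apply, smul_eq_mul] at hle
  exact nonpos_of_mul_nonpos_right hle (sub_pos.2 hab)

lemma second_deriv_nonpos_of_isLocalMax {f f' : ℝ → ℝ} {f'' a : ℝ} (hmax : IsLocalMax f a)
    (hf : ∀ᶠ x in 𝓝 a, HasDerivAt f (f' x) x) (hf' : HasDerivAt f' f'' a) : f'' ≤ 0 := by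
  have hderiv : deriv f =ᶠ[𝓝 a] f' := hf.mono fun x hx => hx.deriv
  have hderiv₂ : deriv (deriv f) a = f'' := hderiv.deriv_eq.trans hf'.deriv
  by_contra! hpos
  have hmin : IsLocalMin f a := isLocalMin_of_deriv_deriv_pos (hderiv₂ ▸ hpos)
    hmax.deriv_eq_zero hf.self_of_nhds.continuousAt
  have hconst : f =ᶠ[𝓝 a] fun _ => f a := by
    filter_upwards [hmax, hmin] with x hle hge using le_antisymm hle hge
  have hzero : deriv (deriv f) a = 0 := by
    rw [hconst.deriv.deriv_eq, deriv_const', deriv_const]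
  exact hpos.ne' (hderiv₂.symm.trans hzero)

lemma continuousOn_of_continuousOn_partial_derivs {U : Set (ℝ × ℝ)} (hU : IsOpen U)
    {u ut ux : ℝ × ℝ → ℝ}
    (h_t : ∀ p ∈ U, HasDerivAt (fun τ => u (τ, p.2)) (ut p) p.1)
    (h_x : ∀ p ∈ U, HasDerivAt (fun ξ => u (p.1, ξ)) (ux p) p.2)
    (ht_cont : ContinuousOn ut U) (hx_cont : ContinuousOn ux U) : ContinuousOn u U := by
  intro p hp
  have hmem : U ∈ 𝓝 p := hU.mem_nhds hp
  let L : ℝ →L[ℝ] ℝ →L[ℝ] ℝ := ContinuousLinearMap.toSpanSingletonCLE.toContinuousLinearMap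
  have hstrict := hasStrictFDerivAt_uncurry_coprod (𝕜 := ℝ) (u := p) (f := fun t x => u (t, x))
    (f₁ := fun t x => ContinuousLinearMap.toSpanSingleton ℝ (ut (t, x)))
    (f₂ := fun t x => ContinuousLinearMap.toSpanSingleton ℝ (ux (t, x)))
    (by filter_upwards [hmem] with q hq using (h_t q hq).hasFDerivAt)
    (by filter_upwards [hmem] with q hq using (h_x q hq).hasFDerivAt)
    (L.continuous.continuousAt.comp (ht_cont.continuousAt hmem))
    (L.continuous.continuousAt.comp (hx_cont.continuousAt hmem))
  exact hstrict.continuousAt.continuousWithinAt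

/-- `u` is a classical solution on `S` of the backward heat equation `-∂ₜu = ∂ₓ²u / 2`, with
derivatives `ut`, `ux` and `uxx` along the coordinate lines. No regularity of these derivatives is
required; the derivatives are two-sided even where `S` is not open. -/
structure IsBackwardHeatOn (S : Set (ℝ × ℝ)) (u ut ux uxx : ℝ × ℝ → ℝ) : Prop where
  cont : ContinuousOn u S
  time : ∀ p ∈ S, HasDerivAt (fun τ => u (τ, p.2)) (ut p) p.1
  space : ∀ p ∈ S, HasDerivAt (fun ξ => u (p.1, ξ)) (ux p) p.2
  space_space : ∀ p ∈ S, HasDerivAt (fun ξ => ux (p.1, ξ)) (uxx p) p.2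
  heat : ∀ p ∈ S, -ut p = (1 / 2) * uxx p

/-- The parabolic cylinder on which interior estimates at `p` are based. The evolution being
backward, it extends from `p` towards later times. -/
def heatCylinder (p : ℝ × ℝ) (r : ℝ) : Set (ℝ × ℝ) :=
  Icc p.1 (p.1 + r ^ 2) ×ˢ Icc (p.2 - r) (p.2 + r)

/-- The difference quotient of `u` at `p` in the space variable, with step `δ`. -/
noncomputable def spaceQuot (δ : ℝ) (u : ℝ × ℝ → ℝ) (p : ℝ × ℝ) : ℝ :=
  δ⁻¹ * (u (p.1, p.2 + δ) - u p)

/-- The quadratic solution of the backward heat equation used for comparison on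
`[t, t + r²] × [0, r]`: it vanishes at `(t, 0)`, is nonnegative where the space variable is `0` and
is at least `1` on the rest of the parabolic boundary. -/
noncomputable def heatBarrier (t r : ℝ) (p : ℝ × ℝ) : ℝ :=
  (p.1 - t) / r ^ 2 + 2 * (p.2 / r) - (p.2 / r) ^ 2

section HeatCylinder

variable {p q : ℝ × ℝ} {r s : ℝ}

lemma self_mem_heatCylinder (hr : 0 ≤ r) : p ∈ heatCylinder p r :=
  ⟨⟨le_rfl, le_add_of_nonneg_right (sq_nonneg r)⟩, sub_le_self _ hr, le_add_of_nonneg_right hr⟩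

lemma heatCylinder_subset_heatCylinder_add (hr : 0 ≤ r) (hs : 0 ≤ s) (hq : q ∈ heatCylinder p r) :
    heatCylinder q s ⊆ heatCylinder p (r + s) := by
  obtain ⟨⟨ht, ht'⟩, hx, hx'⟩ := hq
  rintro z ⟨⟨hzt, hzt'⟩, hzx, hzx'⟩
  exact ⟨⟨by linarith, by nlinarith [mul_nonneg hr hs]⟩, by linarith, by linarith⟩

lemma heatCylinder_subset_closedBall (hr : 0 ≤ r) (hr1 : r ≤ 1) :
    heatCylinder p r ⊆ closedBall p r := by
  rw [← closedBall_prod_same, Real.closedBall_eq_Icc, Real.closedBall_eq_Icc]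
  exact prod_mono_left (Icc_subset_Icc (sub_le_self _ hr) (by nlinarith))

lemma exists_eventually_heatCylinder_subset {S : Set (ℝ × ℝ)} (hS : S ∈ 𝓝 p) :
    ∃ r > 0, ∀ᶠ q in 𝓝 p, heatCylinder q r ⊆ S := by
  obtain ⟨ε, hε, hball⟩ := nhds_basis_closedBall.mem_iff.1 hS
  have hr : 0 < min 1 (ε / 2) := by positivity
  refine ⟨min 1 (ε / 2), hr, ?_⟩
  filter_upwards [closedBall_mem_nhds p (half_pos hε)] with q hq
  calc heatCylinder q (min 1 (ε / 2))
      ⊆ closedBall q (min 1 (ε / 2)) := heatCylinder_subset_closedBall hr.le (min_le_left _ _)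
    _ ⊆ closedBall p ε := closedBall_subset_closedBall' (by
        linarith [min_le_right 1 (ε / 2), mem_closedBall.1 hq])
    _ ⊆ S := hball

end HeatCylinder

section SpaceQuot

variable {u ux uxx : ℝ × ℝ → ℝ} {p : ℝ × ℝ} {δ c C : ℝ}

lemma abs_spaceQuot_sub_le (hδ : δ ≠ 0)
    (hu : ∀ ξ ∈ uIcc p.2 (p.2 + δ), HasDerivAt (fun ξ => u (p.1, ξ)) (ux (p.1, ξ)) ξ)
    (hb : ∀ ξ ∈ uIcc p.2 (p.2 + δ), |ux (p.1, ξ) - c| ≤ C) :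
    |spaceQuot δ u p - c| ≤ C := by
  have hderiv : ∀ ξ ∈ uIcc p.2 (p.2 + δ), HasDerivWithinAt (fun ξ => u (p.1, ξ) - c * ξ)
      (ux (p.1, ξ) - c) (uIcc p.2 (p.2 + δ)) ξ := fun ξ hξ => by
    simpa only [mul_one] using
      ((hu ξ hξ).fun_sub ((hasDerivAt_id' ξ).const_mul c)).hasDerivWithinAt
  have hmean := (convex_uIcc p.2 (p.2 + δ)).norm_image_sub_le_of_norm_hasDerivWithin_le hderiv hb
    left_mem_uIcc right_mem_uIcc
  have hquot : spaceQuot δ u p - c =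
      δ⁻¹ * (u (p.1, p.2 + δ) - c * (p.2 + δ) - (u (p.1, p.2) - c * p.2)) := by
    simp only [spaceQuot]
    field_simp
    ring
  rw [hquot, abs_mul, abs_inv, inv_mul_le_iff₀ (abs_pos.2 hδ), mul_comm |δ|]
  simpa only [Real.norm_eq_abs, add_sub_cancel_left] using hmean

lemma abs_spaceQuot_sub_space_deriv_le (hδ : δ ≠ 0)
    (hu : ∀ ξ ∈ uIcc p.2 (p.2 + δ), HasDerivAt (fun ξ => u (p.1, ξ)) (ux (p.1, ξ)) ξ)
    (hux : ∀ ξ ∈ uIcc p.2 (p.2 + δ), HasDerivAt (fun ξ => ux (p.1, ξ)) (uxx (p.1, ξ)) ξ)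
    (hb : ∀ ξ ∈ uIcc p.2 (p.2 + δ), |uxx (p.1, ξ)| ≤ C) :
    |spaceQuot δ u p - ux p| ≤ C * |δ| := by
  have hC : 0 ≤ C := (abs_nonneg _).trans (hb p.2 left_mem_uIcc)
  refine abs_spaceQuot_sub_le hδ hu fun ξ hξ => ?_
  calc |ux (p.1, ξ) - ux p|
      ≤ C * |ξ - p.2| := (convex_uIcc p.2 (p.2 + δ)).norm_image_sub_le_of_norm_hasDerivWithin_le
        (fun η hη => (hux η hη).hasDerivWithinAt) hb left_mem_uIcc hξ
    _ ≤ C * |δ| := by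
        refine mul_le_mul_of_nonneg_left ?_ hC
        simpa only [add_sub_cancel_left] using abs_sub_left_of_mem_uIcc hξ

lemma exists_nhds_eventually_segment_subset {S : Set (ℝ × ℝ)} (hS : S ∈ 𝓝 p) :
    ∃ T ∈ 𝓝 p, ∀ᶠ δ in 𝓝 (0 : ℝ), ∀ q ∈ T, ∀ ξ ∈ uIcc q.2 (q.2 + δ), (q.1, ξ) ∈ S := by
  obtain ⟨ε, hε, hball⟩ := nhds_basis_closedBall.mem_iff.1 hS
  refine ⟨closedBall p (ε / 2), closedBall_mem_nhds p (half_pos hε), ?_⟩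
  filter_upwards [closedBall_mem_nhds 0 (half_pos hε)] with δ hδ q hq ξ hξ
  have hdist : dist (q.1, ξ) q ≤ ε / 2 := by
    rw [Prod.dist_eq, dist_self, max_eq_right dist_nonneg]
    calc |ξ - q.2| ≤ |δ| := by
          simpa only [add_sub_cancel_left] using abs_sub_left_of_mem_uIcc hξ
      _ ≤ ε / 2 := mem_closedBall_zero_iff.1 hδ
  exact hball (mem_closedBall.2 (by
    linarith [dist_triangle (q.1, ξ) q p, mem_closedBall.1 hq]))

end SpaceQuot

section HeatBarrier

variable {t r : ℝ} {q : ℝ × ℝ}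

lemma heatBarrier_nonneg (hr : 0 < r) (hq : q ∈ Icc t (t + r ^ 2) ×ˢ Icc 0 r) :
    0 ≤ heatBarrier t r q := by
  have htime : 0 ≤ (q.1 - t) / r ^ 2 := div_nonneg (sub_nonneg.2 hq.1.1) (sq_nonneg r)
  have hz : 0 ≤ q.2 / r := div_nonneg hq.2.1 hr.le
  have hz' : q.2 / r ≤ 1 := (div_le_one hr).2 hq.2.2
  simp only [heatBarrier]
  nlinarith

lemma one_le_heatBarrier (hr : 0 < r) (hq : q ∈ Icc t (t + r ^ 2) ×ˢ Icc 0 r)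
    (hbdry : q.1 = t + r ^ 2 ∨ q.2 = r) : 1 ≤ heatBarrier t r q := by
  simp only [heatBarrier]
  rcases hbdry with hq₁ | hq₂
  · have hz : 0 ≤ q.2 / r := div_nonneg hq.2.1 hr.le
    have hz' : q.2 / r ≤ 1 := (div_le_one hr).2 hq.2.2
    rw [hq₁, add_sub_cancel_left, div_self (pow_ne_zero 2 hr.ne')]
    nlinarith
  · have htime : 0 ≤ (q.1 - t) / r ^ 2 := div_nonneg (sub_nonneg.2 hq.1.1) (sq_nonneg r)
    rw [hq₂, div_self hr.ne']
    linarith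

end HeatBarrier

lemma isBackwardHeatOn_heatBarrier (t r : ℝ) (S : Set (ℝ × ℝ)) :
    IsBackwardHeatOn S (heatBarrier t r) (fun _ => 1 / r ^ 2)
      (fun p => 2 / r - 2 * p.2 / r ^ 2) (fun _ => -(2 / r ^ 2)) where
  cont := by
    unfold heatBarrier
    fun_prop
  time p _ := by
    simp only [heatBarrier]
    exact ((((hasDerivAt_id' p.1).sub_const t).div_const (r ^ 2)).add_const _).sub_const _
  space p _ := by
    simp only [heatBarrier]
    have hz : HasDerivAt (fun ξ : ℝ => ξ / r) (1 / r) p.2 := (hasDerivAt_id' p.2).div_const r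
    refine (((hz.const_mul 2).const_add _).fun_sub (hz.fun_pow 2)).congr_deriv ?_
    ring
  space_space p _ := by
    refine ((((hasDerivAt_id' p.2).const_mul 2).div_const (r ^ 2)).const_sub (2 / r)).congr_deriv ?_
    ring
  heat _ _ := by ring

namespace IsBackwardHeatOn

variable {S T : Set (ℝ × ℝ)} {u ut ux uxx v vt vx vxx : ℝ × ℝ → ℝ} {p : ℝ × ℝ}

lemma mono (hu : IsBackwardHeatOn S u ut ux uxx) (hTS : T ⊆ S) :
    IsBackwardHeatOn T u ut ux uxx where
  cont := hu.cont.mono hTS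
  time p hp := hu.time p (hTS hp)
  space p hp := hu.space p (hTS hp)
  space_space p hp := hu.space_space p (hTS hp)
  heat p hp := hu.heat p (hTS hp)

lemma sub (hu : IsBackwardHeatOn S u ut ux uxx) (hv : IsBackwardHeatOn S v vt vx vxx) :
    IsBackwardHeatOn S (fun p => u p - v p) (fun p => ut p - vt p) (fun p => ux p - vx p)
      (fun p => uxx p - vxx p) where
  cont := hu.cont.sub hv.cont
  time p hp := (hu.time p hp).sub (hv.time p hp)
  space p hp := (hu.space p hp).sub (hv.space p hp)
  space_space p hp := (hu.space_space p hp).sub (hv.space_space p hp)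
  heat p hp := by linarith [hu.heat p hp, hv.heat p hp]

lemma const_mul (c : ℝ) (hu : IsBackwardHeatOn S u ut ux uxx) :
    IsBackwardHeatOn S (fun p => c * u p) (fun p => c * ut p) (fun p => c * ux p)
      (fun p => c * uxx p) where
  cont := continuousOn_const.mul hu.cont
  time p hp := (hu.time p hp).const_mul c
  space p hp := (hu.space p hp).const_mul c
  space_space p hp := (hu.space_space p hp).const_mul c
  heat p hp := by linear_combination c * hu.heat p hp

lemma comp_add_const (hu : IsBackwardHeatOn S u ut ux uxx) {c : ℝ}
    (hc : MapsTo (fun p : ℝ × ℝ => (p.1, p.2 + c)) T S) :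
    IsBackwardHeatOn T (fun p => u (p.1, p.2 + c)) (fun p => ut (p.1, p.2 + c))
      (fun p => ux (p.1, p.2 + c)) (fun p => uxx (p.1, p.2 + c)) where
  cont := hu.cont.comp (by fun_prop) hc
  time p hp := hu.time _ (hc hp)
  space p hp := (hu.space _ (hc hp)).comp_add_const p.2 c
  space_space p hp := (hu.space_space _ (hc hp)).comp_add_const p.2 c
  heat p hp := hu.heat _ (hc hp)

lemma comp_const_sub (hu : IsBackwardHeatOn S u ut ux uxx) {c : ℝ}
    (hc : MapsTo (fun p : ℝ × ℝ => (p.1, c - p.2)) T S) :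
    IsBackwardHeatOn T (fun p => u (p.1, c - p.2)) (fun p => ut (p.1, c - p.2))
      (fun p => -ux (p.1, c - p.2)) (fun p => uxx (p.1, c - p.2)) where
  cont := hu.cont.comp (by fun_prop) hc
  time p hp := hu.time _ (hc hp)
  space p hp := (hu.space _ (hc hp)).comp_const_sub c p.2
  space_space p hp := by
    simpa only [neg_neg] using ((hu.space_space _ (hc hp)).comp_const_sub c p.2).fun_neg
  heat p hp := hu.heat _ (hc hp)

lemma spaceQuot_of_mapsTo (hu : IsBackwardHeatOn S u ut ux uxx) {δ : ℝ} (hTS : T ⊆ S)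
    (hδ : MapsTo (fun p : ℝ × ℝ => (p.1, p.2 + δ)) T S) :
    IsBackwardHeatOn T (spaceQuot δ u) (spaceQuot δ ut) (spaceQuot δ ux) (spaceQuot δ uxx) :=
  ((hu.comp_add_const hδ).sub (hu.mono hTS)).const_mul δ⁻¹

/-- **Weak maximum principle.** The set difference is the parabolic boundary: the terminal time and
the two lateral sides. -/
lemma nonpos_of_nonpos_parabolic_boundary {t₀ t₁ a b : ℝ}
    (hcont : ContinuousOn u (Icc t₀ t₁ ×ˢ Icc a b))
    (hu : IsBackwardHeatOn (Ico t₀ t₁ ×ˢ Ioo a b) u ut ux uxx)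
    (hbdry : ∀ q ∈ (Icc t₀ t₁ ×ˢ Icc a b) \ (Ico t₀ t₁ ×ˢ Ioo a b), u q ≤ 0)
    (hp : p ∈ Icc t₀ t₁ ×ˢ Icc a b) : u p ≤ 0 := by
  by_contra! hpos
  -- The linear term makes the subsolution strict while its value at `p` stays positive.
  set ε : ℝ := u p / (t₁ - t₀ + 1)
  have hlen : 0 ≤ t₁ - t₀ := sub_nonneg.2 (hp.1.1.trans hp.1.2)
  have hε : 0 < ε := by positivity
  have hεp : ε * (t₁ - t₀ + 1) = u p := div_mul_cancel₀ _ (by positivity)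
  obtain ⟨q, hq, hmax⟩ := (isCompact_Icc.prod isCompact_Icc).exists_isMaxOn ⟨p, hp⟩
    (hcont.fun_add (show ContinuousOn (fun q : ℝ × ℝ => ε * (q.1 - t₁)) _ by fun_prop))
  have hle : u p + ε * (p.1 - t₁) ≤ u q + ε * (q.1 - t₁) := hmax hp
  have huq : 0 < u q := by nlinarith [hp.1.1, hq.1.2]
  have hqint : q ∈ Ico t₀ t₁ ×ˢ Ioo a b := by_contra fun h => (hbdry q ⟨hq, h⟩).not_gt huq
  have htime : ut q + ε ≤ 0 := by
    refine hasDerivAt_nonpos_of_isMaxOn_Icc_left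
      (f := fun τ => u (τ, q.2) + ε * (τ - t₁)) hqint.1.2
      (fun τ hτ => hmax ⟨Icc_subset_Icc_left hq.1.1 hτ, hq.2⟩) ?_
    simpa only [mul_one] using
      (hu.time q hqint).fun_add (((hasDerivAt_id' q.1).sub_const t₁).const_mul ε)
  have hnear : ∀ᶠ ξ in 𝓝 q.2, ξ ∈ Ioo a b := isOpen_Ioo.mem_nhds hqint.2
  have hspace : uxx q ≤ 0 := second_deriv_nonpos_of_isLocalMax
    (f := fun ξ => u (q.1, ξ) + ε * (q.1 - t₁))
    (hnear.mono fun ξ hξ => hmax ⟨hq.1, Ioo_subset_Icc_self hξ⟩)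
    (hnear.mono fun ξ hξ => (hu.space (q.1, ξ) ⟨hqint.1, hξ⟩).add_const _)
    (hu.space_space q hqint)
  linarith [hu.heat q hqint]

section InteriorEstimates

variable {r M : ℝ}

lemma sub_reflection_le_heatBarrier (hr : 0 < r)
    (hu : IsBackwardHeatOn (heatCylinder p r) u ut ux uxx)
    (hb : ∀ q ∈ heatCylinder p r, |u q| ≤ M) {y : ℝ} (hy : y ∈ Icc 0 r) :
    u (p.1, y + p.2) - u (p.1, p.2 - y) ≤ 2 * M * heatBarrier p.1 r (p.1, y) := by
  set K : Set (ℝ × ℝ) := Icc p.1 (p.1 + r ^ 2) ×ˢ Icc 0 r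
  have hadd : MapsTo (fun q : ℝ × ℝ => (q.1, q.2 + p.2)) K (heatCylinder p r) := fun q hq =>
    ⟨hq.1, by linarith [hq.2.1], by linarith [hq.2.2]⟩
  have hsub : MapsTo (fun q : ℝ × ℝ => (q.1, p.2 - q.2)) K (heatCylinder p r) := fun q hq =>
    ⟨hq.1, by linarith [hq.2.2], by linarith [hq.2.1]⟩
  have hsol := ((hu.comp_add_const hadd).sub (hu.comp_const_sub hsub)).sub
    ((isBackwardHeatOn_heatBarrier p.1 r K).const_mul (2 * M))
  have hM : 0 ≤ M := (abs_nonneg _).trans (hb p (self_mem_heatCylinder hr.le))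
  refine sub_nonpos.1 (nonpos_of_nonpos_parabolic_boundary (p := (p.1, y)) hsol.cont
    (hsol.mono (prod_mono Ico_subset_Icc_self Ioo_subset_Icc_self)) ?_
    ⟨left_mem_Icc.2 (le_add_of_nonneg_right (sq_nonneg r)), hy⟩)
  rintro q ⟨hqK, hqint⟩
  obtain hq₂ | hbdry : q.2 = 0 ∨ q.1 = p.1 + r ^ 2 ∨ q.2 = r := by
    contrapose! hqint
    exact ⟨⟨hqK.1.1, hqK.1.2.lt_of_ne hqint.2.1⟩, hqK.2.1.lt_of_ne' hqint.1,
      hqK.2.2.lt_of_ne hqint.2.2⟩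
  · rw [hq₂, zero_add, sub_zero, sub_self, zero_sub]
    exact neg_nonpos.2 (mul_nonneg (by positivity) (heatBarrier_nonneg hr hqK))
  · have hplus := (abs_le.1 (hb _ (hadd hqK))).2
    have hminus := (abs_le.1 (hb _ (hsub hqK))).1
    nlinarith [one_le_heatBarrier hr hqK hbdry]

lemma space_deriv_le (hr : 0 < r) (hu : IsBackwardHeatOn (heatCylinder p r) u ut ux uxx)
    (hb : ∀ q ∈ heatCylinder p r, |u q| ≤ M) : ux p ≤ 2 * M / r := by
  have hp : p ∈ heatCylinder p r := self_mem_heatCylinder hr.le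
  have hM : 0 ≤ M := (abs_nonneg _).trans (hb p hp)
  have hadd : HasDerivAt (fun y => u (p.1, y + p.2)) (ux p) 0 :=
    HasDerivAt.comp_add_const 0 p.2 (by simpa only [zero_add] using hu.space p hp)
  have hsub : HasDerivAt (fun y => u (p.1, p.2 - y)) (-ux p) 0 :=
    HasDerivAt.comp_const_sub p.2 0 (by simpa only [sub_zero] using hu.space p hp)
  have hlin : HasDerivAt (fun y : ℝ => 4 * M / r * y) (4 * M / r) 0 := by
    simpa only [mul_one] using (hasDerivAt_id' (0 : ℝ)).const_mul (4 * M / r)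
  have hle := hasDerivAt_nonpos_of_isMaxOn_Icc_left hr (fun y hy => ?_)
    ((hadd.fun_sub hsub).fun_sub hlin)
  · linarith [show 4 * M / r = 2 * (2 * M / r) by ring]
  · have hbarrier := hu.sub_reflection_le_heatBarrier hr hb hy
    have hquad : 0 ≤ M * (y / r) ^ 2 := by positivity
    have hexpand : 2 * M * heatBarrier p.1 r (p.1, y) =
        4 * M / r * y - 2 * (M * (y / r) ^ 2) := by
      simp only [heatBarrier, sub_self, zero_div]
      ring
    simp only [mem_ofPred_eq, zero_add, sub_zero, sub_self, mul_zero]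
    linarith

lemma abs_space_deriv_le (hr : 0 < r) (hu : IsBackwardHeatOn (heatCylinder p r) u ut ux uxx)
    (hb : ∀ q ∈ heatCylinder p r, |u q| ≤ M) : |ux p| ≤ 2 * M / r := by
  have hneg : -1 * ux p ≤ 2 * M / r :=
    (hu.const_mul (-1)).space_deriv_le hr (by simpa only [neg_one_mul, abs_neg] using hb)
  exact abs_le.2 ⟨by linarith, hu.space_deriv_le hr hb⟩

lemma abs_space_space_deriv_le_of_abs_space_deriv_le (hr : 0 < r)
    (hu : IsBackwardHeatOn (heatCylinder p (r + r)) u ut ux uxx)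
    (hb : ∀ q ∈ heatCylinder p (r + r), |ux q| ≤ M) : |uxx p| ≤ 2 * M / r := by
  have hp : p ∈ heatCylinder p (r + r) := self_mem_heatCylinder (by positivity)
  refine le_of_tendsto (hu.space_space p hp).tendsto_slope_zero.abs ?_
  filter_upwards [self_mem_nhdsWithin, nhdsWithin_le_nhds (closedBall_mem_nhds 0 hr)] with δ hδ hδr
  have hsegment : ∀ q ∈ heatCylinder p r, ∀ ξ ∈ uIcc q.2 (q.2 + δ),
      (q.1, ξ) ∈ heatCylinder p (r + r) := by
    intro q hq ξ hξ
    have hξδ : |ξ - q.2| ≤ r := (abs_sub_left_of_mem_uIcc hξ).trans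
      (by rw [add_sub_cancel_left]; exact mem_closedBall_zero_iff.1 hδr)
    refine heatCylinder_subset_heatCylinder_add hr.le hr.le hq
      ⟨left_mem_Icc.2 (le_add_of_nonneg_right (sq_nonneg r)), ?_, ?_⟩ <;>
      linarith [abs_le.1 hξδ]
  have hquot : IsBackwardHeatOn (heatCylinder p r) _ _ (spaceQuot δ ux) _ :=
    hu.spaceQuot_of_mapsTo (fun q hq => hsegment q hq q.2 left_mem_uIcc)
      (fun q hq => hsegment q hq _ right_mem_uIcc)
  refine hquot.abs_space_deriv_le hr fun q hq => ?_
  simpa only [sub_zero] using abs_spaceQuot_sub_le (c := 0) hδ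
    (fun ξ hξ => hu.space (q.1, ξ) (hsegment q hq ξ hξ))
    (fun ξ hξ => by simpa only [sub_zero] using hb _ (hsegment q hq ξ hξ))

lemma abs_space_space_deriv_le (hr : 0 < r)
    (hu : IsBackwardHeatOn (heatCylinder p r) u ut ux uxx)
    (hb : ∀ q ∈ heatCylinder p r, |u q| ≤ M) : |uxx p| ≤ 36 * M / r ^ 2 := by
  have hr3 : 0 < r / 3 := by positivity
  have hthirds : r / 3 + r / 3 + r / 3 = r := by ring
  have hsub : ∀ q ∈ heatCylinder p (r / 3 + r / 3), heatCylinder q (r / 3) ⊆ heatCylinder p r := by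
    intro q hq
    have h := heatCylinder_subset_heatCylinder_add (by positivity) hr3.le hq
    rwa [hthirds] at h
  have hux : ∀ q ∈ heatCylinder p (r / 3 + r / 3), |ux q| ≤ 2 * M / (r / 3) := fun q hq =>
    (hu.mono (hsub q hq)).abs_space_deriv_le hr3 fun z hz => hb z (hsub q hq hz)
  have hinner : IsBackwardHeatOn (heatCylinder p (r / 3 + r / 3)) u ut ux uxx :=
    hu.mono fun q hq => hsub q hq (self_mem_heatCylinder hr3.le)
  calc |uxx p| ≤ 2 * (2 * M / (r / 3)) / (r / 3) :=
        hinner.abs_space_space_deriv_le_of_abs_space_deriv_le hr3 hux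
    _ = 36 * M / r ^ 2 := by
        field_simp
        ring

lemma abs_time_deriv_le (hr : 0 < r) (hu : IsBackwardHeatOn (heatCylinder p r) u ut ux uxx)
    (hb : ∀ q ∈ heatCylinder p r, |u q| ≤ M) : |ut p| ≤ 18 * M / r ^ 2 := by
  have hut : ut p = -(uxx p / 2) := by linarith [hu.heat p (self_mem_heatCylinder hr.le)]
  rw [hut, abs_neg, abs_div, abs_two, div_le_iff₀ two_pos]
  exact (hu.abs_space_space_deriv_le hr hb).trans_eq (by ring)

end InteriorEstimates

section Regularity

lemma exists_eventually_abs_space_space_deriv_le (hS : S ∈ 𝓝 p)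
    (hu : IsBackwardHeatOn S u ut ux uxx) : ∃ C, ∀ᶠ q in 𝓝 p, |uxx q| ≤ C := by
  have hbound : ∀ᶠ q in 𝓝 p, |u q| < |u p| + 1 :=
    (hu.cont.continuousAt hS).abs.eventually_lt_const (lt_add_one _)
  obtain ⟨r, hr, hsub⟩ := exists_eventually_heatCylinder_subset (inter_mem hS hbound)
  refine ⟨36 * (|u p| + 1) / r ^ 2, ?_⟩
  filter_upwards [hsub] with q hq
  exact (hu.mono fun z hz => (hq hz).1).abs_space_space_deriv_le hr fun z hz => (hq hz).2.le

lemma exists_nhds_eventually_spaceQuot (hS : S ∈ 𝓝 p) (hu : IsBackwardHeatOn S u ut ux uxx) :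
    ∃ T ∈ 𝓝 p, ∀ᶠ δ in 𝓝[≠] (0 : ℝ), IsBackwardHeatOn T
      (spaceQuot δ u) (spaceQuot δ ut) (spaceQuot δ ux)
      (spaceQuot δ uxx) := by
  obtain ⟨T, hT, hsegment⟩ := exists_nhds_eventually_segment_subset hS
  refine ⟨T, hT, nhdsWithin_le_nhds ?_⟩
  filter_upwards [hsegment] with δ hδ
  exact hu.spaceQuot_of_mapsTo (fun q hq => hδ q hq q.2 left_mem_uIcc)
    (fun q hq => hδ q hq _ right_mem_uIcc)

lemma exists_nhds_tendstoUniformlyOn_spaceQuot (hS : S ∈ 𝓝 p)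
    (hu : IsBackwardHeatOn S u ut ux uxx) :
    ∃ T ∈ 𝓝 p, TendstoUniformlyOn (fun δ => spaceQuot δ u) ux (𝓝[≠] 0) T := by
  obtain ⟨C, hC⟩ := hu.exists_eventually_abs_space_space_deriv_le hS
  obtain ⟨T, hT, hsegment⟩ := exists_nhds_eventually_segment_subset (inter_mem hS hC)
  refine ⟨T, hT, Metric.tendstoUniformlyOn_iff.2 fun ε hε => ?_⟩
  have hsmall : ∀ᶠ δ in 𝓝 (0 : ℝ), C * |δ| < ε :=
    (Continuous.tendsto' (by fun_prop) 0 0 (by rw [abs_zero, mul_zero])).eventually_lt_const hε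
  filter_upwards [self_mem_nhdsWithin, nhdsWithin_le_nhds hsegment, nhdsWithin_le_nhds hsmall]
    with δ hδ hδT hδε q hq
  rw [dist_comm]
  exact (abs_spaceQuot_sub_space_deriv_le hδ
    (fun ξ hξ => hu.space _ (hδT q hq ξ hξ).1)
    (fun ξ hξ => hu.space_space _ (hδT q hq ξ hξ).1)
    (fun ξ hξ => (hδT q hq ξ hξ).2)).trans_lt hδε

lemma exists_nhds_uniformCauchySeqOn_time_deriv {ι : Type*} {l : Filter ι}
    {F Ft Fx Fxx : ι → ℝ × ℝ → ℝ} (hS : S ∈ 𝓝 p)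
    (hF : ∀ᶠ n in l, IsBackwardHeatOn S (F n) (Ft n) (Fx n) (Fxx n))
    (hcauchy : UniformCauchySeqOn F l S) : ∃ T ∈ 𝓝 p, UniformCauchySeqOn Ft l T := by
  obtain ⟨r, hr, hsub⟩ := exists_eventually_heatCylinder_subset hS
  refine ⟨_, hsub, fun s hs => ?_⟩
  obtain ⟨ε, hε, hεs⟩ := Metric.mem_uniformity_dist.1 hs
  have hclose := hcauchy _ (Metric.dist_mem_uniformity (show 0 < ε * r ^ 2 / 36 by positivity))
  filter_upwards [hclose, hF.prod_mk hF] with ⟨m, n⟩ hmn ⟨hm, hn⟩ q hq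
  refine hεs ?_
  calc dist (Ft m q) (Ft n q)
      ≤ 18 * (ε * r ^ 2 / 36) / r ^ 2 :=
        ((hm.sub hn).mono hq).abs_time_deriv_le hr fun z hz => (hmn z (hq hz)).le
    _ = ε / 2 := by
        field_simp
        norm_num
    _ < ε := half_lt_self hε

lemma exists_mixed_deriv (hS : S ∈ 𝓝 p) (hu : IsBackwardHeatOn S u ut ux uxx) :
    ∃ c, HasDerivAt (fun ξ => ut (p.1, ξ)) c p.2 ∧ HasDerivAt (fun τ => ux (τ, p.2)) c p.1 := by
  obtain ⟨S₁, hS₁, hsol⟩ := hu.exists_nhds_eventually_spaceQuot hS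
  obtain ⟨S₂, hS₂, hux⟩ := hu.exists_nhds_tendstoUniformlyOn_spaceQuot hS
  obtain ⟨T, hT, hcauchy⟩ := exists_nhds_uniformCauchySeqOn_time_deriv (inter_mem hS₁ hS₂)
    (hsol.mono fun δ hδ => hδ.mono inter_subset_left)
    (hux.uniformCauchySeqOn.mono inter_subset_right)
  have hlim : ∀ q ∈ T, ∃ c, Tendsto (fun δ => spaceQuot δ ut q) (𝓝[≠] 0) (𝓝 c) :=
    fun q hq => cauchy_map_iff_exists_tendsto.1 (hcauchy.cauchy_map hq)
  choose! utx hutx using hlim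
  have hunif : TendstoUniformlyOnFilter (fun δ => spaceQuot δ ut) utx (𝓝[≠] 0) (𝓝 p) :=
    (hcauchy.tendstoUniformlyOn_of_tendsto hutx).tendstoUniformlyOnFilter.mono_right
      (le_principal_iff.2 hT)
  have hline : Tendsto (fun τ => (τ, p.2)) (𝓝 p.1) (𝓝 p) :=
    (Continuous.prodMk_left p.2).tendsto p.1
  refine ⟨utx p, hasDerivAt_iff_tendsto_slope_zero.2 (hutx p (mem_of_mem_nhds hT)), ?_⟩
  refine hasDerivAt_of_tendstoUniformlyOnFilter (l := 𝓝[≠] (0 : ℝ))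
    (f := fun δ τ => spaceQuot δ u (τ, p.2)) (g' := fun τ => utx (τ, p.2))
    ((hunif.comp fun τ => (τ, p.2)).mono_right hline.le_comap) ?_ ?_
  · exact (hsol.prod_mk (hline.eventually hS₁)).mono fun _ h => h.1.time _ h.2
  · exact (hline.eventually hS₂).mono fun _ hτ => hux.tendsto_at hτ

end Regularity

end IsBackwardHeatOn

theorem cole_hopf_burgers_general {U : Set (ℝ × ℝ)} (hU : IsOpen U) {h ht hx hxx : ℝ × ℝ → ℝ}
    (hheat : IsBackwardHeatOn U h ht hx hxx) (hne : ∀ p ∈ U, h p ≠ 0) :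
    ∀ p ∈ U,
      -(deriv (fun τ : ℝ => hx (τ, p.2) / h (τ, p.2)) p.1) =
        (1 / 2) * deriv (deriv (fun ξ : ℝ => hx (p.1, ξ) / h (p.1, ξ))) p.2 +
          (hx p / h p) * deriv (fun ξ : ℝ => hx (p.1, ξ) / h (p.1, ξ)) p.2 := by
  intro p hp
  have hnear : ∀ᶠ ξ in 𝓝 p.2, (p.1, ξ) ∈ U :=
    (Continuous.prodMk_right p.1).continuousAt.eventually (hU.mem_nhds hp)
  obtain ⟨htx, hht, hhx⟩ := hheat.exists_mixed_deriv (hU.mem_nhds hp)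
  have hhxx : HasDerivAt (fun ξ => hxx (p.1, ξ)) (-2 * htx) p.2 :=
    (hht.const_mul (-2)).congr_of_eventuallyEq
      (hnear.mono fun ξ hξ => by linarith [hheat.heat _ hξ])
  have hμt := hhx.fun_div (hheat.time p hp) (hne p hp)
  have hμx : ∀ q ∈ U, HasDerivAt (fun ξ => hx (q.1, ξ) / h (q.1, ξ))
      ((hxx q * h q - hx q * hx q) / h q ^ 2) q.2 := fun q hq =>
    (hheat.space_space q hq).fun_div (hheat.space q hq) (hne q hq)
  have hμxx := ((hhxx.fun_mul (hheat.space p hp)).fun_sub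
    ((hheat.space_space p hp).fun_mul (hheat.space_space p hp))).fun_div
    ((hheat.space p hp).fun_pow 2) (pow_ne_zero 2 (hne p hp))
  have hderiv : deriv (fun ξ => hx (p.1, ξ) / h (p.1, ξ)) =ᶠ[𝓝 p.2]
      fun ξ => (hxx (p.1, ξ) * h (p.1, ξ) - hx (p.1, ξ) * hx (p.1, ξ)) / h (p.1, ξ) ^ 2 :=
    hnear.mono fun ξ hξ => (hμx (p.1, ξ) hξ).deriv
  have hp₀ : h p ≠ 0 := hne p hp
  have ht_eq : ht p = -(1 / 2) * hxx p := by linarith [hheat.heat p hp]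
  rw [hμt.deriv, hderiv.deriv_eq, hμxx.deriv, (hμx p hp).deriv]
  simp only [Prod.mk.eta, ht_eq]
  field_simp
  ring

/-- **Cole–Hopf correspondence.**
If `h : ℝ × ℝ → ℝ` is continuously differentiable in `t` and twice continuously
differentiable in `x` on an open set `U`, is nonvanishing on `U`, and solves the
backward heat equation `−∂h/∂t = (1/2)·∂²h/∂x²` on `U` (with partial derivatives
`ht`, `hx`, `hxx`), then `μ := hx / h` solves Burgers' equation
`−∂μ/∂t = (1/2)·∂²μ/∂x² + μ·∂μ/∂x` on `U`. -/
theorem cole_hopf_burgers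
    (U : Set (ℝ × ℝ)) (hU : IsOpen U)
    (h ht hx hxx : ℝ × ℝ → ℝ)
    (hne : ∀ p ∈ U, h p ≠ 0)
    -- `h` is differentiable in `t` with partial derivative `ht`
    (h_t : ∀ p ∈ U, HasDerivAt (fun τ : ℝ => h (τ, p.2)) (ht p) p.1)
    -- `h` is twice differentiable in `x` with partial derivatives `hx`, `hxx`
    (h_x : ∀ p ∈ U, HasDerivAt (fun ξ : ℝ => h (p.1, ξ)) (hx p) p.2)
    (h_xx : ∀ p ∈ U, HasDerivAt (fun ξ : ℝ => hx (p.1, ξ)) (hxx p) p.2)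
    -- continuity of the partial derivatives on `U`
    (ht_cont : ContinuousOn ht U)
    (hx_cont : ContinuousOn hx U)
    (hxx_cont : ContinuousOn hxx U)
    -- `h` solves the backward heat equation on `U`
    (heat : ∀ p ∈ U, -ht p = (1 / 2) * hxx p) :
    ∀ p ∈ U,
      -(deriv (fun τ : ℝ => hx (τ, p.2) / h (τ, p.2)) p.1) =
        (1 / 2) * deriv (deriv (fun ξ : ℝ => hx (p.1, ξ) / h (p.1, ξ))) p.2 +
          (hx p / h p) * deriv (fun ξ : ℝ => hx (p.1, ξ) / h (p.1, ξ)) p.2 :=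
  cole_hopf_burgers_general hU
    ⟨continuousOn_of_continuousOn_partial_derivs hU h_t h_x ht_cont hx_cont, h_t, h_x, h_xx, heat⟩
    hne
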